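/- In the presented group P = ⟨s₁, s₂ | s₁², s₂⁴⟩ (the free product ℤ/2 * ℤ/4), the elements g' = s₁s₂² and h' = s₂⁻¹s₁s₂⁻¹ satisfy the commutator identity [g', h'] = (s₁s₂)⁴, where [g',h'] = g'h'g'⁻¹h'⁻¹. -/

import Mathlib

/-- Relators of the free product ℤ/2 * ℤ/4 on generators s₁ = of 0, s₂ = of 1. -/
def fpRels : Set (FreeGroup (Fin 2)) := {FreeGroup.of 0 ^ 2, FreeGroup.of 1 ^ 4}

/-- The generator s₁. -/
def u₁ : PresentedGroup fpRels := PresentedGroup.of 0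

/-- The generator s₂. -/
def u₂ : PresentedGroup fpRels := PresentedGroup.of 1

theorem u₁_sq : u₁ ^ 2 = 1 :=
  PresentedGroup.one_of_mem (rels := fpRels) (x := FreeGroup.of 0 ^ 2) (Or.inl rfl)

theorem u₂_pow_four : u₂ ^ 4 = 1 :=
  PresentedGroup.one_of_mem (rels := fpRels) (x := FreeGroup.of 1 ^ 4) (Or.inr rfl)

theorem stmt11 :
    (u₁ * u₂ ^ 2) * (u₂⁻¹ * u₁ * u₂⁻¹) *
      (u₁ * u₂ ^ 2)⁻¹ * (u₂⁻¹ * u₁ * u₂⁻¹)⁻¹ = (u₁ * u₂) ^ 4 := by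
  have h₁ : u₁⁻¹ = u₁ := inv_eq_of_mul_eq_one_left (by rw [← pow_two, u₁_sq])
  have h₂ : u₂⁻¹ ^ 3 = u₂ := by
    rw [inv_pow]
    exact inv_eq_of_mul_eq_one_left (by rw [← pow_succ', u₂_pow_four])
  calc
    -- Free reduction brings the commutator to this form, where both relators apply.
    _ = u₁ * u₂ * u₁ * u₂⁻¹ ^ 3 * u₁⁻¹ * u₂ * u₁⁻¹ * u₂ := by group
    _ = (u₁ * u₂) ^ 4 := by
      rw [h₂, h₁]
      simp only [pow_succ, pow_zero, one_mul, mul_assoc]
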